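/- arXiv:0705.0844 — 10 statements merged into one kernel-verified Lean document; each statement's English description precedes it below -/
import Mathlib

section
/- Let Γ be a group, and let F ⊆ F̃ be two collections of subgroups of Γ, each closed under conjugation and under passing to subgroups. Suppose a collection 𝓗 of subgroups of Γ is adapted to the pair (F, F̃), i.e.: (1) for all H₁, H₂ ∈ 𝓗, either H₁ = H₂ or H₁ ⊓ H₂ ∈ F; (2) 𝓗 is closed under conjugation; (3) every H ∈ 𝓗 is self-normalizing (N_Γ(H) = H); (4) every G ∈ F̃ \ F is contained in some H ∈ 𝓗. Then the relation on F̃ \ F defined by G₁ ∼ G₂ if and only if there exists H ∈ 𝓗 with G₁ ≤ H and G₂ ≤ H is an equivalence relation (reflexive, symmetric, and transitive). -/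
/-- If the collection `𝓗` of subgroups of `Γ` is adapted to the nested pair of
families `(F, F̃)`, then the relation on `F̃ \ F` given by `G₁ ∼ G₂ ↔ ∃ H ∈ 𝓗, G₁ ≤ H ∧ G₂ ≤ H`
is an equivalence relation. -/
theorem adapted_relation_is_equivalence {Γ : Type*} [Group Γ]
    (F Ftilde : Set (Subgroup Γ))
    (hFF : F ⊆ Ftilde)
    (hFconj : ∀ H ∈ F, ∀ g : Γ, Subgroup.map (MulAut.conj g).toMonoidHom H ∈ F)
    (hFsub : ∀ H ∈ F, ∀ K : Subgroup Γ, K ≤ H → K ∈ F)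
    (hFtconj : ∀ H ∈ Ftilde, ∀ g : Γ, Subgroup.map (MulAut.conj g).toMonoidHom H ∈ Ftilde)
    (hFtsub : ∀ H ∈ Ftilde, ∀ K : Subgroup Γ, K ≤ H → K ∈ Ftilde)
    (𝓗 : Set (Subgroup Γ))
    (h1 : ∀ H₁ ∈ 𝓗, ∀ H₂ ∈ 𝓗, H₁ = H₂ ∨ H₁ ⊓ H₂ ∈ F)
    (h2 : ∀ H ∈ 𝓗, ∀ g : Γ, Subgroup.map (MulAut.conj g).toMonoidHom H ∈ 𝓗)
    (h3 : ∀ H ∈ 𝓗, Subgroup.normalizer H = H)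
    (h4 : ∀ G ∈ Ftilde \ F, ∃ H ∈ 𝓗, G ≤ H) :
    Equivalence (fun G₁ G₂ : {G : Subgroup Γ // G ∈ Ftilde \ F} =>
      ∃ H ∈ 𝓗, G₁.1 ≤ H ∧ G₂.1 ≤ H) := by
  refine ⟨fun G => ?_, ?_, ?_⟩
  · obtain ⟨H, hH, hG⟩ := h4 G.1 G.2
    exact ⟨H, hH, hG, hG⟩
  · rintro G₁ G₂ ⟨H, hH, ha, hb⟩
    exact ⟨H, hH, hb, ha⟩
  · rintro G₁ G₂ G₃ ⟨H, hH, ha, hb⟩ ⟨K, hK, hc, hd⟩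
    rcases h1 H hH K hK with h | h
    · subst h
      exact ⟨H, hH, ha, hd⟩
    · exact absurd (hFsub _ h G₂.1 (le_inf hb hc)) G₂.2.2
end

section
/- Let Γ be a group, let F ⊆ F̃ be two collections of subgroups of Γ, each closed under conjugation and under passing to subgroups, and let 𝓗 be a collection of subgroups adapted to (F, F̃) (conditions (1)-(4)). Let G ∈ F̃ \ F and let H be the unique element of 𝓗 with G ≤ H. Then for every k ∈ Γ the following are equivalent: (a) there exists H' ∈ 𝓗 with G ≤ H' and kGk⁻¹ ≤ H'; (b) k ∈ H. (In the notation of the paper: N_Γ[G] = H.) -/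
/-- With `𝓗` adapted to `(F, F̃)`, `G ∈ F̃ \ F` and `H` the (unique) element of
`𝓗` containing `G`, one has `N_Γ[G] = H`: for every `k ∈ Γ`, there is some `H' ∈ 𝓗`
containing both `G` and `kGk⁻¹` if and only if `k ∈ H`. -/
theorem adapted_N_gamma_eq {Γ : Type*} [Group Γ]
    (F Ftilde : Set (Subgroup Γ))
    (hFF : F ⊆ Ftilde)
    (hFconj : ∀ H ∈ F, ∀ g : Γ, Subgroup.map (MulAut.conj g).toMonoidHom H ∈ F)
    (hFsub : ∀ H ∈ F, ∀ K : Subgroup Γ, K ≤ H → K ∈ F)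
    (hFtconj : ∀ H ∈ Ftilde, ∀ g : Γ, Subgroup.map (MulAut.conj g).toMonoidHom H ∈ Ftilde)
    (hFtsub : ∀ H ∈ Ftilde, ∀ K : Subgroup Γ, K ≤ H → K ∈ Ftilde)
    (𝓗 : Set (Subgroup Γ))
    (h1 : ∀ H₁ ∈ 𝓗, ∀ H₂ ∈ 𝓗, H₁ = H₂ ∨ H₁ ⊓ H₂ ∈ F)
    (h2 : ∀ H ∈ 𝓗, ∀ g : Γ, Subgroup.map (MulAut.conj g).toMonoidHom H ∈ 𝓗)
    (h3 : ∀ H ∈ 𝓗, Subgroup.normalizer H = H)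
    (h4 : ∀ G ∈ Ftilde \ F, ∃ H ∈ 𝓗, G ≤ H)
    (G : Subgroup Γ) (hG : G ∈ Ftilde \ F)
    (H : Subgroup Γ) (hH : H ∈ 𝓗) (hGH : G ≤ H) :
    ∀ k : Γ,
      (∃ H' ∈ 𝓗, G ≤ H' ∧ Subgroup.map (MulAut.conj k).toMonoidHom G ≤ H') ↔ k ∈ H := by
  have uniq : ∀ A ∈ 𝓗, G ≤ A → H = A := by
    intro A hA hGA
    rcases h1 H hH A hA with h | h
    · exact h
    · exact absurd (hFsub _ h G (le_inf hGH hGA)) hG.2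
  intro k
  constructor
  · rintro ⟨H', hH', hG1, hG2⟩
    obtain rfl := uniq H' hH' hG1
    have e := uniq _ (h2 H hH k⁻¹) (by
      intro x hx
      refine ⟨k * x * k⁻¹, hG2 ⟨x, hx, by simp⟩, ?_⟩
      simp [mul_assoc])
    have hk : k ∈ Subgroup.normalizer (H : Set Γ) := by
      rw [Subgroup.mem_normalizer_iff]
      intro x
      constructor
      · intro hx
        rw [e] at hx
        obtain ⟨y, hy, rfl⟩ := hx
        simpa [mul_assoc] using hy
      · intro hx
        rw [e]
        exact ⟨k * x * k⁻¹, hx, by simp [mul_assoc]⟩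
    rwa [h3 H hH] at hk
  · intro hk
    refine ⟨H, hH, hGH, ?_⟩
    rintro _ ⟨x, hx, rfl⟩
    simpa using H.mul_mem (H.mul_mem hk (hGH hx)) (H.inv_mem hk)
end

section
/- The amalgamated free product D_{10} *_{D_5} D_{10} is isomorphic to D_5 × D_∞. Concretely: let ι : D_5 → D_5 × ℤ/2 be the inclusion into the first factor; then the pushout (amalgamated free product) of two copies of ι, amalgamated along D_5, is isomorphic to the direct product D_5 × D_∞ of D_5 with the infinite dihedral group. -/
namespace PushD

/-- hom from ℤ/2 given by an involution -/
def zHom {G : Type*} [Group G] (g : G) (hg : g * g = 1) : Multiplicative (ZMod 2) →* G where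
  toFun x := if x = 1 then 1 else g
  map_one' := by simp
  map_mul' := by
    have key : ∀ x : Multiplicative (ZMod 2), x = 1 ∨ x = Multiplicative.ofAdd 1 := by decide
    have h1 : (Multiplicative.ofAdd (1 : ZMod 2)) ≠ 1 := by decide
    have h2 : (Multiplicative.ofAdd (1 : ZMod 2)) * Multiplicative.ofAdd 1 = 1 := by decide
    intro x y
    rcases key x with rfl | rfl <;> rcases key y with rfl | rfl
    · simp
    · simp
    · simp
    · rw [h2, if_pos rfl, if_neg h1, hg]

theorem zHom_t {G : Type*} [Group G] (g : G) (hg : g * g = 1) :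
    zHom g hg (Multiplicative.ofAdd 1) = g := by
  have h1 : (Multiplicative.ofAdd (1 : ZMod 2)) ≠ 1 := by decide
  change (if Multiplicative.ofAdd (1 : ZMod 2) = 1 then 1 else g) = g
  rw [if_neg h1]

theorem z_ext {G : Type*} [Group G] (f g : Multiplicative (ZMod 2) →* G)
    (h : f (Multiplicative.ofAdd 1) = g (Multiplicative.ofAdd 1)) : f = g := by
  have key : ∀ x : Multiplicative (ZMod 2), x = 1 ∨ x = Multiplicative.ofAdd 1 := by decide
  apply MonoidHom.ext
  intro x
  rcases key x with rfl | rfl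
  · simp
  · exact h

theorem flip_zpow {G : Type*} [Group G] (a b : G) (ha : a * a = 1) (hb : b * b = 1) (i : ℤ) :
    (a * b) ^ i * a = a * (a * b) ^ (-i) := by
  have hai : a⁻¹ = a := inv_eq_of_mul_eq_one_left ha
  have hbi : b⁻¹ = b := inv_eq_of_mul_eq_one_left hb
  have h : (a * b)⁻¹ = a⁻¹ * (a * b) * a⁻¹⁻¹ := by
    rw [mul_inv_rev, hai, hbi, hai, ← mul_assoc a a b, ha, one_mul]
  rw [zpow_neg, ← inv_zpow, h, conj_zpow]
  group

/-- the function underlying `dHom` -/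
def dFun {G : Type*} [Group G] (a b : G) : DihedralGroup 0 → G
  | .r i => (a * b) ^ (show ℤ from i)
  | .sr i => a * (a * b) ^ (show ℤ from i)

/-- hom from the infinite dihedral group given by two involutions -/
def dHom {G : Type*} [Group G] (a b : G) (ha : a * a = 1) (hb : b * b = 1) :
    DihedralGroup 0 →* G where
  toFun := dFun a b
  map_one' := zpow_zero (a * b)
  map_mul' := by
    have h1 : ∀ i j : ℤ, a * (a * b) ^ (j - i) = (a * b) ^ i * (a * (a * b) ^ j) := by
      intro i j
      rw [← mul_assoc, flip_zpow a b ha hb i, mul_assoc, ← zpow_add, sub_eq_neg_add]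
    have h2 : ∀ i j : ℤ, a * (a * b) ^ (i + j) = a * (a * b) ^ i * (a * b) ^ j := by
      intro i j
      rw [mul_assoc, ← zpow_add]
    have h3 : ∀ i j : ℤ, (a * b) ^ (j - i) = a * (a * b) ^ i * (a * (a * b) ^ j) := by
      intro i j
      rw [mul_assoc a, ← h1, ← mul_assoc, ha, one_mul]
    rintro (i | i) (j | j)
    · exact zpow_add (a * b) i j
    · exact h1 i j
    · exact h2 i j
    · exact h3 i j

theorem dHom_0 {G : Type*} [Group G] (a b : G) (ha : a * a = 1) (hb : b * b = 1) :
    dHom a b ha hb (.sr 0) = a := by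
  change a * (a * b) ^ (0 : ℤ) = a
  simp

theorem dHom_1 {G : Type*} [Group G] (a b : G) (ha : a * a = 1) (hb : b * b = 1) :
    dHom a b ha hb (.sr 1) = b := by
  change a * (a * b) ^ (1 : ℤ) = b
  rw [zpow_one, ← mul_assoc, ha, one_mul]

theorem r_eq (i : ZMod 0) :
    (DihedralGroup.r i) = (DihedralGroup.sr 0 * DihedralGroup.sr 1) ^ (show ℤ from i) := by
  rw [DihedralGroup.sr_mul_sr, DihedralGroup.r_zpow, sub_zero, one_mul]
  rfl

theorem sr_eq (i : ZMod 0) : (DihedralGroup.sr i) =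
    DihedralGroup.sr 0 * (DihedralGroup.sr 0 * DihedralGroup.sr 1) ^ (show ℤ from i) := by
  rw [← r_eq, DihedralGroup.sr_mul_r, zero_add]

theorem d_ext {G : Type*} [Group G] (f g : DihedralGroup 0 →* G)
    (h0 : f (.sr 0) = g (.sr 0)) (h1 : f (.sr 1) = g (.sr 1)) : f = g := by
  apply MonoidHom.ext
  rintro (i | i)
  · rw [r_eq, map_zpow, map_zpow, map_mul, map_mul, h0, h1]
  · rw [sr_eq, map_mul, map_mul, map_zpow, map_zpow, map_mul, map_mul, h0, h1]

/-- the diagram -/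
abbrev ph : ∀ _ : Fin 2, DihedralGroup 5 →* DihedralGroup 5 × Multiplicative (ZMod 2) :=
  fun _ => MonoidHom.inl (DihedralGroup 5) (Multiplicative (ZMod 2))

/-- the involutions in the pushout -/
def tt (i : Fin 2) : Monoid.PushoutI ph :=
  Monoid.PushoutI.of (φ := ph) i (1, Multiplicative.ofAdd 1)

theorem tt_sq (i : Fin 2) : tt i * tt i = 1 := by
  unfold tt
  rw [← map_mul]
  exact map_one (Monoid.PushoutI.of (φ := ph) i)

theorem base_comm (h : DihedralGroup 5) (i : Fin 2) :
    Commute (Monoid.PushoutI.base ph h) (tt i) := by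
  rw [← Monoid.PushoutI.of_apply_eq_base ph i h]
  unfold tt Commute SemiconjBy
  rw [← map_mul, ← map_mul]
  simp

/-- hom from the infinite dihedral group to the pushout -/
def dP : DihedralGroup 0 →* Monoid.PushoutI ph := dHom (tt 0) (tt 1) (tt_sq 0) (tt_sq 1)

theorem comm (h : DihedralGroup 5) (d : DihedralGroup 0) :
    Commute (Monoid.PushoutI.base ph h) (dP d) := by
  have hc := (base_comm h 0).mul_right (base_comm h 1)
  rcases d with i | i
  · exact hc.zpow_right _
  · exact (base_comm h 0).mul_right (hc.zpow_right _)

/-- backward map -/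
def bwd : DihedralGroup 5 × DihedralGroup 0 →* Monoid.PushoutI ph :=
  MonoidHom.noncommCoprod (Monoid.PushoutI.base ph) dP comm

theorem sr_sq (i : ZMod 0) : DihedralGroup.sr i * DihedralGroup.sr i = 1 := by simp

/-- the reflection attached to an index -/
def ix (i : Fin 2) : ZMod 0 := if i = 0 then 0 else 1

/-- forward map -/
def fwd : Monoid.PushoutI ph →* DihedralGroup 5 × DihedralGroup 0 :=
  Monoid.PushoutI.lift
    (fun i => MonoidHom.prodMap (MonoidHom.id _) (zHom (.sr (ix i)) (sr_sq (ix i))))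
    (MonoidHom.inl _ _) (by
      intro i
      apply MonoidHom.ext
      intro x
      simp)

theorem fwd_base (h : DihedralGroup 5) : fwd (Monoid.PushoutI.base ph h) = (h, 1) := by
  unfold fwd
  rw [Monoid.PushoutI.lift_base]
  rfl

theorem fwd_tt (i : Fin 2) : fwd (tt i) = (1, .sr (ix i)) := by
  unfold fwd tt
  rw [Monoid.PushoutI.lift_of]
  simp [zHom_t]

theorem dP_ix (i : Fin 2) : dP (.sr (ix i)) = tt i := by
  fin_cases i
  · exact dHom_0 _ _ _ _
  · exact dHom_1 _ _ _ _

theorem bwd_fwd : bwd.comp fwd = MonoidHom.id _ := by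
  have hb : ∀ h, bwd (fwd (Monoid.PushoutI.base ph h)) = Monoid.PushoutI.base ph h := by
    intro h
    rw [fwd_base]
    simp [bwd]
  apply Monoid.PushoutI.hom_ext
  · intro i
    apply MonoidHom.ext
    rintro ⟨h, z⟩
    have e : ((h, z) : DihedralGroup 5 × Multiplicative (ZMod 2)) = (h, 1) * (1, z) := by simp
    have e1 : Monoid.PushoutI.of (φ := ph) i (h, 1) = Monoid.PushoutI.base ph h :=
      Monoid.PushoutI.of_apply_eq_base ph i h
    have e2 : (bwd.comp fwd).comp
        ((Monoid.PushoutI.of (φ := ph) i).comp (MonoidHom.inr _ _)) =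
        (Monoid.PushoutI.of (φ := ph) i).comp (MonoidHom.inr _ _) := by
      apply z_ext
      change bwd (fwd (tt i)) = tt i
      rw [fwd_tt]
      simp [bwd, dP_ix]
    have e3 := DFunLike.congr_fun e2 z
    change bwd (fwd (Monoid.PushoutI.of (φ := ph) i (1, z))) =
      Monoid.PushoutI.of (φ := ph) i (1, z) at e3
    change bwd (fwd (Monoid.PushoutI.of (φ := ph) i (h, z))) =
      Monoid.PushoutI.of (φ := ph) i (h, z)
    rw [e, map_mul, map_mul, map_mul, e3, e1, hb]
  · apply MonoidHom.ext
    exact hb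

theorem fwd_bwd : fwd.comp bwd = MonoidHom.id _ := by
  have e : fwd.comp dP = MonoidHom.inr _ _ := by
    apply d_ext
    · change fwd (dP (.sr (ix 0))) = (1, .sr (ix 0))
      rw [dP_ix, fwd_tt]
    · change fwd (dP (.sr (ix 1))) = (1, .sr (ix 1))
      rw [dP_ix, fwd_tt]
  apply MonoidHom.ext
  rintro ⟨h, d⟩
  have e1 : fwd (dP d) = (1, d) := DFunLike.congr_fun e d
  simp [bwd, fwd_base, e1]

end PushD

/-- `D_{10} *_{D_5} D_{10} ≅ D_5 × D_∞`: the pushout of two copies of the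
inclusion `D_5 → D_5 × ℤ/2 ≅ D_{10}` into the first factor, amalgamated along `D_5`, is
isomorphic to the direct product of `D_5` with the infinite dihedral group `D_∞`. -/
theorem pushout_D10_amalg_D5_iso :
    Nonempty
      (Monoid.PushoutI
          (fun _ : Fin 2 =>
            MonoidHom.inl (DihedralGroup 5) (Multiplicative (ZMod 2))) ≃*
        DihedralGroup 5 × DihedralGroup 0) := by
  exact ⟨MonoidHom.toMulEquiv PushD.fwd PushD.bwd PushD.bwd_fwd PushD.fwd_bwd⟩
end

section
/- Inside the group A_5 × ℤ/2, every subgroup isomorphic to the dihedral group D_5 (of order 10) is contained in a subgroup isomorphic to the dihedral group D_{10} (of order 20). -/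
/-- The map `D_10 → D_5 × ℤ/2`. -/
def psiFun : DihedralGroup 10 → DihedralGroup 5 × Multiplicative (ZMod 2)
  | .r i => (.r (ZMod.cast i), Multiplicative.ofAdd (ZMod.cast i))
  | .sr i => (.sr (ZMod.cast i), Multiplicative.ofAdd (ZMod.cast i))

set_option maxRecDepth 100000 in
theorem psiFun_mul : ∀ a b, psiFun (a * b) = psiFun a * psiFun b := by
  have h5 : ∀ i j : ZMod 10, (ZMod.cast (i + j) : ZMod 5) = ZMod.cast i + ZMod.cast j := by decide
  have h2 : ∀ i j : ZMod 10, (ZMod.cast (i + j) : ZMod 2) = ZMod.cast i + ZMod.cast j := by decide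
  have k5 : ∀ i j : ZMod 10, (ZMod.cast (i - j) : ZMod 5) = ZMod.cast i - ZMod.cast j := by decide
  have k2 : ∀ i j : ZMod 10, (ZMod.cast (i - j) : ZMod 2) = ZMod.cast j + ZMod.cast i := by decide
  have k2' : ∀ i j : ZMod 10, (ZMod.cast (i - j) : ZMod 2) = ZMod.cast i + ZMod.cast j := by decide
  rintro (i | i) (j | j)
  · simp [psiFun, h5, h2]
  · simp only [psiFun, DihedralGroup.r_mul_sr, Prod.mk_mul_mk, k5, k2, ofAdd_add]
  · simp [psiFun, h5, h2]
  · simp only [psiFun, DihedralGroup.sr_mul_sr, Prod.mk_mul_mk, k5, k2, ofAdd_add]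

theorem psiFun_inj : Function.Injective psiFun := by
  have h : ∀ i j : ZMod 10, (ZMod.cast i : ZMod 5) = ZMod.cast j →
    (ZMod.cast i : ZMod 2) = ZMod.cast j → i = j := by decide
  rintro (i | i) (j | j) hij <;> simp [psiFun] at hij
  · rw [h i j hij.1 hij.2]
  · rw [h i j hij.1 hij.2]

theorem d5_center : ∀ d : DihedralGroup 5, (∀ x, d * x = x * d) → d = 1 := by
  have h1 : ∀ i : ZMod 5, 0 - i = 0 + i → i = 0 := by decide
  have h2 : ∀ i : ZMod 5, i + 1 ≠ i - 1 := by decide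
  rintro (i | i) h
  · have := h (.sr 0)
    simp only [DihedralGroup.r_mul_sr, DihedralGroup.sr_mul_r, DihedralGroup.sr.injEq] at this
    rw [h1 i this]; rfl
  · have := h (.r 1)
    simp only [DihedralGroup.r_mul_sr, DihedralGroup.sr_mul_r, DihedralGroup.sr.injEq] at this
    exact absurd this (h2 i)

/-- Inside `A_5 × ℤ/2`, every subgroup isomorphic to `D_5` is contained in a
subgroup isomorphic to `D_{10}`. -/
theorem D5_subgroup_le_D10_subgroup
    (H : Subgroup (alternatingGroup (Fin 5) × Multiplicative (ZMod 2)))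
    (hH : Nonempty (H ≃* DihedralGroup 5)) :
    ∃ K : Subgroup (alternatingGroup (Fin 5) × Multiplicative (ZMod 2)),
      H ≤ K ∧ Nonempty (K ≃* DihedralGroup 10) := by
  obtain ⟨e⟩ := hH
  let φ : DihedralGroup 5 →* alternatingGroup (Fin 5) × Multiplicative (ZMod 2) :=
    H.subtype.comp e.symm.toMonoidHom
  have hφ : Function.Injective φ := H.subtype_injective.comp e.symm.injective
  let ι : Multiplicative (ZMod 2) →* alternatingGroup (Fin 5) × Multiplicative (ZMod 2) :=
    MonoidHom.inr _ _
  have hc : ∀ t g, Commute g (ι t) := by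
    intro t g
    refine Prod.ext ?_ ?_
    · simp [ι]
    · exact mul_comm _ _
  let F : DihedralGroup 5 × Multiplicative (ZMod 2) →*
      alternatingGroup (Fin 5) × Multiplicative (ZMod 2) :=
    φ.noncommCoprod ι (fun d t => hc t (φ d))
  have hF : Function.Injective F := by
    rw [injective_iff_map_eq_one]
    rintro ⟨d, t⟩ h
    have h' : φ d * ι t = 1 := h
    have hd : d = 1 := by
      apply d5_center
      intro x
      apply hφ
      rw [map_mul, map_mul, eq_inv_of_mul_eq_one_left h', ← map_inv]
      exact (hc _ _).symm.eq
    subst hd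
    rw [map_one, one_mul] at h'
    have ht : t = 1 := congrArg Prod.snd h'
    rw [ht]; rfl
  let ψ : DihedralGroup 10 →* DihedralGroup 5 × Multiplicative (ZMod 2) :=
    MonoidHom.mk' psiFun psiFun_mul
  have hψ : Function.Injective ψ := psiFun_inj
  have hs : Function.Surjective ψ := by
    refine ((Nat.bijective_iff_injective_and_card ψ).2 ⟨hψ, ?_⟩).2
    rw [Nat.card_prod, DihedralGroup.nat_card, DihedralGroup.nat_card]
    simp
  refine ⟨(F.comp ψ).range, ?_, ⟨(MonoidHom.ofInjective (f := F.comp ψ) (hF.comp hψ)).symm⟩⟩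
  intro g hg
  obtain ⟨y, hy⟩ := hs (e ⟨g, hg⟩, 1)
  refine ⟨y, ?_⟩
  rw [MonoidHom.comp_apply, hy]
  change φ (e ⟨g, hg⟩) * ι 1 = g
  simp [φ]
end

section
/- Inside the group A_5 × ℤ/2, any two subgroups isomorphic to the dihedral group D_{10} (of order 20) are conjugate to each other. -/
theorem D10_aux
    (H : Subgroup (alternatingGroup (Fin 5) × Multiplicative (ZMod 2)))
    (hH : Nonempty (H ≃* DihedralGroup 10)) :
    ∃ P : Sylow 5 (alternatingGroup (Fin 5) × Multiplicative (ZMod 2)),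
      H = Subgroup.normalizer (P : Set (alternatingGroup (Fin 5) × Multiplicative (ZMod 2))) := by
  obtain ⟨e⟩ := hH
  have : Fact (Nat.Prime 5) := ⟨by norm_num⟩
  have hA : Nat.card (alternatingGroup (Fin 5)) = 60 := by
    rw [nat_card_alternatingGroup]; simp [Nat.factorial]
  have hZ : Nat.card (Multiplicative (ZMod 2)) = 2 := by simp
  have hG : Nat.card (alternatingGroup (Fin 5) × Multiplicative (ZMod 2)) = 120 := by
    rw [Nat.card_prod, hA, hZ]
  have hHc : Nat.card H = 20 := by
    rw [Nat.card_congr e.toEquiv, DihedralGroup.nat_card]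
  set y : H := e.symm (DihedralGroup.r 2) with hy
  have hyo : orderOf (y : alternatingGroup (Fin 5) × Multiplicative (ZMod 2)) = 5 := by
    rw [Subgroup.orderOf_coe, hy, MulEquiv.orderOf_eq]
    apply orderOf_eq_prime <;> decide
  have hd : ∀ g : DihedralGroup 10, g * DihedralGroup.r 2 * g⁻¹ = DihedralGroup.r 2 ∨
      g * DihedralGroup.r 2 * g⁻¹ = (DihedralGroup.r 2)⁻¹ := by
    rintro (i | i)
    · revert i; decide
    · revert i; decide
  have hconj : ∀ h : H, h * y * h⁻¹ = y ∨ h * y * h⁻¹ = y⁻¹ := by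
    intro h
    refine (hd (e h)).imp ?_ ?_ <;> intro hh <;> apply e.injective <;> simpa [hy] using hh
  have hQc : Nat.card (Subgroup.zpowers (y : alternatingGroup (Fin 5) × Multiplicative (ZMod 2)))
      = 5 ^ (Nat.card (alternatingGroup (Fin 5) × Multiplicative (ZMod 2))).factorization 5 := by
    have h1 : (120 : ℕ).factorization 5 = 1 := by
      rw [Nat.factorization_def _ (by norm_num), show 120 = 5 * 24 by norm_num,
        padicValNat.mul (by norm_num) (by norm_num), padicValNat_self,
        padicValNat.eq_zero_of_not_dvd (by norm_num)]
    rw [Nat.card_zpowers, hyo, hG, h1, pow_one]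
  let P := Sylow.ofCard _ hQc
  have hPQ : (P : Subgroup (alternatingGroup (Fin 5) × Multiplicative (ZMod 2))) = Subgroup.zpowers
    (y : alternatingGroup (Fin 5) × Multiplicative (ZMod 2)) := rfl
  have hPc : Nat.card P = 5 := by
    change Nat.card (P : Subgroup (alternatingGroup (Fin 5) × Multiplicative (ZMod 2))) = 5
    rw [hPQ, Nat.card_zpowers, hyo]
  have hle : H ≤ Subgroup.normalizer
      (P : Set (alternatingGroup (Fin 5) × Multiplicative (ZMod 2))) := by
    have key : ∀ h : H, ∀ x ∈ (P : Subgroup (alternatingGroup (Fin 5) × Multiplicative (ZMod 2))), (h : alternatingGroup (Fin 5) × Multiplicative (ZMod 2)) * x * (h : alternatingGroup (Fin 5) × Multiplicative (ZMod 2))⁻¹ ∈ (P : Subgroup (alternatingGroup (Fin 5) × Multiplicative (ZMod 2))) := by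
      intro h x hx
      rw [hPQ] at hx ⊢
      obtain ⟨k, rfl⟩ := Subgroup.mem_zpowers_iff.1 hx
      rw [← conj_zpow]
      apply Subgroup.zpow_mem
      rcases hconj h with h1 | h1
      · have := congrArg Subtype.val h1
        push_cast at this
        rw [this]; exact Subgroup.mem_zpowers _
      · have := congrArg Subtype.val h1
        push_cast at this
        rw [this]; exact Subgroup.inv_mem _ (Subgroup.mem_zpowers _)
    intro h hh
    refine Subgroup.mem_normalizer_iff (H := (P : Subgroup (alternatingGroup (Fin 5) × Multiplicative (ZMod 2)))).2 ?_
    intro x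
    refine ⟨key ⟨h, hh⟩ x, fun hx => ?_⟩
    have := key ⟨h, hh⟩⁻¹ _ hx
    simpa [mul_assoc] using this
  refine ⟨P, ?_⟩
  have hn1 := card_sylow_modEq_one 5 (alternatingGroup (Fin 5) × Multiplicative (ZMod 2))
  have hidx := P.card_eq_index_normalizer
  have hmul := Subgroup.card_mul_index (Subgroup.normalizer
      (P : Set (alternatingGroup (Fin 5) × Multiplicative (ZMod 2))))
  rw [hG] at hmul
  have hne : (Subgroup.normalizer
      (P : Set (alternatingGroup (Fin 5) × Multiplicative (ZMod 2)))).index ≠ 1 := by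
    intro h
    rw [Subgroup.index_eq_one] at h
    have hN : (P : Subgroup (alternatingGroup (Fin 5) × Multiplicative (ZMod 2))).Normal := (Subgroup.normalizer_eq_top_iff (H := (P : Subgroup (alternatingGroup (Fin 5) × Multiplicative (ZMod 2))))).1 h
    have hM : ((P : Subgroup (alternatingGroup (Fin 5) × Multiplicative (ZMod 2))).map (MonoidHom.fst (alternatingGroup (Fin 5))
      (Multiplicative (ZMod 2)))).Normal := hN.map _ Prod.fst_surjective
    rcases hM.eq_bot_or_eq_top with h1 | h1
    · rw [Subgroup.map_eq_bot_iff] at h1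
      have hy1 : (y : alternatingGroup (Fin 5) × Multiplicative (ZMod 2)).1 = 1 :=
        h1 (Subgroup.mem_zpowers _)
      have : (y : alternatingGroup (Fin 5) × Multiplicative (ZMod 2)) ^ 2 = 1 := by
        ext1
        · simp [hy1]
        · have := pow_card_eq_one' (x := (y : alternatingGroup (Fin 5) × Multiplicative (ZMod 2)).2)
          rwa [hZ] at this
      have := orderOf_dvd_of_pow_eq_one this
      rw [hyo] at this
      norm_num at this
    · have := Subgroup.card_map_dvd (H := (P : Subgroup (alternatingGroup (Fin 5) × Multiplicative (ZMod 2)))) (MonoidHom.fst (alternatingGroup (Fin 5))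
        (Multiplicative (ZMod 2)))
      rw [h1, Subgroup.card_top, hA] at this
      rw [show Nat.card (P : Subgroup (alternatingGroup (Fin 5) × Multiplicative (ZMod 2))) = 5 from hPc] at this
      norm_num at this
  rw [hidx] at hn1
  apply Subgroup.eq_of_le_of_card_ge hle
  rw [hHc]
  generalize Subgroup.index (Subgroup.normalizer (P : Set (alternatingGroup (Fin 5) × Multiplicative (ZMod 2)))) = n at *
  generalize Nat.card (Subgroup.normalizer (P : Set (alternatingGroup (Fin 5) × Multiplicative (ZMod 2)))) = m at *
  have : 6 ≤ n := by
    unfold Nat.ModEq at hn1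
    omega
  nlinarith

/-- Inside `A_5 × ℤ/2`, any two subgroups isomorphic to `D_{10}` are conjugate. -/
theorem D10_subgroups_conjugate
    (H K : Subgroup (alternatingGroup (Fin 5) × Multiplicative (ZMod 2)))
    (hH : Nonempty (H ≃* DihedralGroup 10))
    (hK : Nonempty (K ≃* DihedralGroup 10)) :
    ∃ g : alternatingGroup (Fin 5) × Multiplicative (ZMod 2),
      Subgroup.map (MulAut.conj g).toMonoidHom H = K := by
  have : Fact (Nat.Prime 5) := ⟨by norm_num⟩
  obtain ⟨P, rfl⟩ := D10_aux H hH
  obtain ⟨Q, rfl⟩ := D10_aux K hK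
  obtain ⟨g, rfl⟩ := MulAction.exists_smul_eq
    (alternatingGroup (Fin 5) × Multiplicative (ZMod 2)) P Q
  refine ⟨g, ?_⟩
  have h := Subgroup.map_equiv_normalizer_eq (P : Subgroup (alternatingGroup (Fin 5) × Multiplicative (ZMod 2))) (MulAut.conj g)
  exact h
end

section
/- Every hyper-elementary subgroup of the alternating group A_5 is isomorphic to a subgroup of one of the following three groups: the Klein four-group ℤ/2 × ℤ/2, the dihedral group D_3 of order 6, or the dihedral group D_5 of order 10. -/
/-- A finite group is hyper-elementary if it has a cyclic normal subgroup `C` such that the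
quotient by `C` is a `p`-group for some prime `p` not dividing the order of `C`. -/
def IsHyperElementary (G : Type*) [Group G] : Prop :=
  ∃ C : Subgroup G, ∃ hN : C.Normal, IsCyclic C ∧
    ∃ p : ℕ, p.Prime ∧ ¬ p ∣ Nat.card C ∧
      @IsPGroup p (G ⧸ C) (@QuotientGroup.Quotient.group G _ C hN)

open Equiv in
theorem aux_embed {D : Type*} [Group D] (φ : D →* Perm (Fin 5)) (hφ : Function.Injective φ)
    (g : Perm (Fin 5)) (H : Subgroup (alternatingGroup (Fin 5)))
    (hH : ∀ h ∈ H, ∃ d, φ d = g⁻¹ * (h : Perm (Fin 5)) * g) :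
    ∃ f : H →* D, Function.Injective f := by
  have key : ∀ h : H, ∃ d, φ d = g⁻¹ * ((h : alternatingGroup (Fin 5)) : Perm (Fin 5)) * g :=
    fun h => hH h h.2
  choose f hf using key
  refine ⟨MonoidHom.mk' f ?_, ?_⟩
  · intro a b
    apply hφ
    rw [map_mul, hf, hf, hf]
    simp [mul_assoc]
  · intro a b hab
    have : φ (f a) = φ (f b) := congrArg φ hab
    rw [hf, hf] at this
    exact Subtype.ext (Subtype.ext (mul_left_cancel (mul_right_cancel this)))

open Equiv in
def auxC3 : Perm (Fin 5) := swap 0 1 * swap 1 2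
open Equiv in
def auxT3 : Perm (Fin 5) := swap 0 1 * swap 3 4
open Equiv in
def auxC5 : Perm (Fin 5) := finRotate 5
open Equiv in
def auxT5 : Perm (Fin 5) := swap 1 4 * swap 2 3
open Equiv in
def auxA : Perm (Fin 5) := swap 0 1 * swap 2 3
open Equiv in
def auxB : Perm (Fin 5) := swap 0 2 * swap 1 3

open Equiv in
def auxF (n : ℕ) (c t : Perm (Fin 5)) : DihedralGroup n → Perm (Fin 5)
  | .r i => c ^ i.val
  | .sr i => t * c ^ i.val

open Equiv in
def auxG (x : Multiplicative (ZMod 2) × Multiplicative (ZMod 2)) : Perm (Fin 5) :=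
  auxA ^ (x.1.toAdd.val) * auxB ^ (x.2.toAdd.val)

theorem auxF3_mul : ∀ a b, auxF 3 auxC3 auxT3 (a * b) = auxF 3 auxC3 auxT3 a * auxF 3 auxC3 auxT3 b := by
  rintro (a | a) (b | b) <;> revert a b <;> decide +kernel
theorem auxF5_mul : ∀ a b, auxF 5 auxC5 auxT5 (a * b) = auxF 5 auxC5 auxT5 a * auxF 5 auxC5 auxT5 b := by
  rintro (a | a) (b | b) <;> revert a b <;> decide +kernel
theorem auxG_mul : ∀ a b, auxG (a * b) = auxG a * auxG b := by
  have : ∀ a b c d : ZMod 2, auxG ((.ofAdd a, .ofAdd b) * (.ofAdd c, .ofAdd d))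
      = auxG (.ofAdd a, .ofAdd b) * auxG (.ofAdd c, .ofAdd d) := by decide +kernel
  exact fun a b => this a.1 a.2 b.1 b.2
theorem auxF3_ker : ∀ a, auxF 3 auxC3 auxT3 a = 1 → a = 1 := by
  rintro (a | a) <;> revert a <;> decide +kernel
theorem auxF5_ker : ∀ a, auxF 5 auxC5 auxT5 a = 1 → a = 1 := by
  rintro (a | a) <;> revert a <;> decide +kernel
theorem auxG_ker : ∀ a, auxG a = 1 → a = 1 := by
  have : ∀ a b : ZMod 2, auxG (.ofAdd a, .ofAdd b) = 1 → a = 0 ∧ b = 0 := by decide +kernel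
  intro a h
  exact Prod.ext (this a.1 a.2 h).1 (this a.1 a.2 h).2

open Equiv in
theorem aux_norm3 : ∀ h : Perm (Fin 5), Perm.sign h = 1 →
    (∃ i : Fin 3, h * auxC3 * h⁻¹ = auxC3 ^ i.val) →
    ((∃ i : ZMod 3, auxC3 ^ i.val = h) ∨ (∃ i : ZMod 3, auxT3 * auxC3 ^ i.val = h)) := by
  decide +kernel
open Equiv in
theorem aux_norm5 : ∀ h : Perm (Fin 5), Perm.sign h = 1 →
    (∃ i : Fin 5, h * auxC5 * h⁻¹ = auxC5 ^ i.val) →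
    ((∃ i : ZMod 5, auxC5 ^ i.val = h) ∨ (∃ i : ZMod 5, auxT5 * auxC5 ^ i.val = h)) := by
  decide +kernel
open Equiv in
theorem aux_norm2 : ∀ h : Perm (Fin 5), Perm.sign h = 1 →
    (∃ i : Fin 2, h * auxA * h⁻¹ = auxA ^ i.val) →
    (∃ i j : ZMod 2, auxA ^ i.val * auxB ^ j.val = h) := by
  decide +kernel
open Equiv in
theorem aux_orders : ∀ h : Perm (Fin 5), Perm.sign h = 1 → h ^ 2 = 1 ∨ h ^ 3 = 1 ∨ h ^ 5 = 1 := by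
  decide +kernel

theorem auxC3_ct : auxC3.cycleType = {3} := by decide +kernel
theorem auxC5_ct : auxC5.cycleType = {5} := by decide +kernel
theorem auxA_ct : auxA.cycleType = {2, 2} := by decide +kernel

open Equiv in
/-- transport of the normalizing condition to a representative -/
theorem aux_transport (n : ℕ) (hn : 0 < n) (c c0 g : Perm (Fin 5)) (hc : orderOf c = n)
    (hg : g * c0 * g⁻¹ = c) (h : Perm (Fin 5)) (hh : h * c * h⁻¹ ∈ Subgroup.zpowers c) :
    ∃ i : Fin n, (g⁻¹ * h * g) * c0 * (g⁻¹ * h * g)⁻¹ = c0 ^ i.val := by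
  have hp : h * c * h⁻¹ ∈ Submonoid.powers c := mem_powers_iff_mem_zpowers.2 hh
  obtain ⟨k, hk⟩ := hp
  refine ⟨⟨k % n, Nat.mod_lt _ hn⟩, ?_⟩
  have e : c0 = g⁻¹ * c * g := by rw [← hg]; group
  have e2 : c0 ^ n = 1 := by
    have : c0 = g⁻¹ * c * g⁻¹⁻¹ := by rw [e, inv_inv]
    rw [this, conj_pow, ← hc, pow_orderOf_eq_one]; group
  have e3 : c0 ^ k = g⁻¹ * c ^ k * g := by
    have : c0 = g⁻¹ * c * g⁻¹⁻¹ := by rw [e, inv_inv]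
    rw [this, conj_pow, inv_inv]
  have e4 : c0 ^ (k % n) = c0 ^ k := (pow_eq_pow_mod k e2).symm
  have hk' : c ^ k = h * c * h⁻¹ := hk
  change _ = c0 ^ (k % n)
  rw [e4, e3, hk', e]
  group

open Equiv in
theorem aux_main (H : Subgroup (alternatingGroup (Fin 5))) (c : alternatingGroup (Fin 5))
    (hc : c ≠ 1) (hn : ∀ h ∈ H, h * c * h⁻¹ ∈ Subgroup.zpowers c) :
    (∃ f : H →* Multiplicative (ZMod 2) × Multiplicative (ZMod 2), Function.Injective f) ∨
    (∃ f : H →* DihedralGroup 3, Function.Injective f) ∨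
    (∃ f : H →* DihedralGroup 5, Function.Injective f) := by
  have hs : ∀ x : alternatingGroup (Fin 5), Perm.sign (x : Perm (Fin 5)) = 1 :=
    fun x => Perm.mem_alternatingGroup.1 x.2
  have hc' : (c : Perm (Fin 5)) ≠ 1 := fun h => hc (Subtype.ext h)
  have hn' : ∀ h ∈ H, (h : Perm (Fin 5)) * c * (h : Perm (Fin 5))⁻¹ ∈
      Subgroup.zpowers (c : Perm (Fin 5)) := by
    intro h hh
    obtain ⟨k, hk⟩ := hn h hh
    exact ⟨k, by simpa using congrArg Subtype.val hk⟩
  have hsg : ∀ (g : Perm (Fin 5)) (x : alternatingGroup (Fin 5)),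
      Perm.sign (g⁻¹ * (x : Perm (Fin 5)) * g) = 1 := by
    intro g x
    rw [Perm.sign_mul, Perm.sign_mul, hs x, Perm.sign_inv, mul_one, Int.units_mul_self]
  have hsum : (c : Perm (Fin 5)).cycleType.sum ≤ 5 := by
    simpa using (c : Perm (Fin 5)).sum_cycleType_le
  rcases aux_orders c (hs c) with h | h | h
  · left
    have ho := orderOf_eq_prime h hc'
    obtain ⟨n, hct⟩ := Perm.cycleType_prime_order (by rw [ho]; norm_num)
    have hsc := hs c
    rw [Perm.sign_of_cycleType] at hsc
    rw [ho] at hct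
    rw [hct] at hsum hsc
    simp at hsum
    have : n = 1 := by
      have : n ≤ 1 := by omega
      interval_cases n
      · exact absurd hsc (by decide)
      · rfl
    subst this
    obtain ⟨g, hg⟩ := isConj_iff.1 (Perm.isConj_iff_cycleType_eq.2 (auxA_ct.trans hct.symm))
    refine aux_embed (MonoidHom.mk' auxG auxG_mul)
      ((injective_iff_map_eq_one _).2 auxG_ker) g H fun h hh => ?_
    obtain ⟨i, j, hij⟩ := aux_norm2 _ (hsg g h) (aux_transport 2 (by norm_num) c _ g ho hg h (hn' h hh))
    exact ⟨(.ofAdd i, .ofAdd j), hij⟩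
  · right; left
    have ho := orderOf_eq_prime h hc'
    obtain ⟨n, hct⟩ := Perm.cycleType_prime_order (by rw [ho]; norm_num)
    rw [ho] at hct
    rw [hct] at hsum
    simp at hsum
    have : n = 0 := by omega
    subst this
    obtain ⟨g, hg⟩ := isConj_iff.1 (Perm.isConj_iff_cycleType_eq.2 (auxC3_ct.trans hct.symm))
    refine aux_embed (MonoidHom.mk' _ auxF3_mul)
      ((injective_iff_map_eq_one _).2 auxF3_ker) g H fun h hh => ?_
    rcases aux_norm3 _ (hsg g h) (aux_transport 3 (by norm_num) c _ g ho hg h (hn' h hh))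
      with ⟨i, hi⟩ | ⟨i, hi⟩
    · exact ⟨.r i, hi⟩
    · exact ⟨.sr i, hi⟩
  · right; right
    have : Fact (Nat.Prime 5) := ⟨by norm_num⟩
    have ho := orderOf_eq_prime h hc'
    obtain ⟨n, hct⟩ := Perm.cycleType_prime_order (by rw [ho]; norm_num)
    rw [ho] at hct
    rw [hct] at hsum
    simp at hsum
    have : n = 0 := by omega
    subst this
    obtain ⟨g, hg⟩ := isConj_iff.1 (Perm.isConj_iff_cycleType_eq.2 (auxC5_ct.trans hct.symm))
    refine aux_embed (MonoidHom.mk' _ auxF5_mul)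
      ((injective_iff_map_eq_one _).2 auxF5_ker) g H fun h hh => ?_
    rcases aux_norm5 _ (hsg g h) (aux_transport 5 (by norm_num) c _ g ho hg h (hn' h hh))
      with ⟨i, hi⟩ | ⟨i, hi⟩
    · exact ⟨.r i, hi⟩
    · exact ⟨.sr i, hi⟩

/-- Every hyper-elementary subgroup of `A_5` is isomorphic to a subgroup of
the Klein four-group `ℤ/2 × ℤ/2`, of `D_3`, or of `D_5`. -/
theorem hyperelementary_subgroups_of_A5
    (H : Subgroup (alternatingGroup (Fin 5))) (hH : IsHyperElementary H) :
    (∃ f : H →* Multiplicative (ZMod 2) × Multiplicative (ZMod 2), Function.Injective f) ∨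
    (∃ f : H →* DihedralGroup 3, Function.Injective f) ∨
    (∃ f : H →* DihedralGroup 5, Function.Injective f) := by
  obtain ⟨C, hN, hcyc, p, hp, hpC, hP⟩ := hH
  have : Fact p.Prime := ⟨hp⟩
  by_cases hC : C = ⊥
  · subst hC
    have hPH : IsPGroup p H := hP.of_equiv QuotientGroup.quotientBot
    rcases subsingleton_or_nontrivial H with hsub | hnt
    · exact Or.inl ⟨1, Function.injective_of_subsingleton _⟩
    · have := hPH.center_nontrivial
      obtain ⟨c, hc⟩ := exists_ne (1 : Subgroup.center H)
      refine aux_main H (c : H) (fun h => hc (Subtype.ext (Subtype.ext h))) fun h hh => ?_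
      have := Subgroup.mem_center_iff.1 c.2 ⟨h, hh⟩
      have := congrArg Subtype.val this
      simp only [Subgroup.coe_mul] at this
      rw [this, mul_inv_cancel_right]
      exact Subgroup.mem_zpowers _
  · obtain ⟨c, hc⟩ := hcyc.exists_generator
    refine aux_main H (c : H) (fun h => hC ?_) fun h hh => ?_
    · have h1 : c = 1 := Subtype.ext (Subtype.ext h)
      refine (Subgroup.eq_bot_iff_forall _).2 fun x hx => ?_
      have := hc ⟨x, hx⟩
      rw [h1, Subgroup.zpowers_one_eq_bot, Subgroup.mem_bot] at this
      exact congrArg Subtype.val this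
    · obtain ⟨k, hk⟩ := hc ⟨_, hN.conj_mem c c.2 ⟨h, hh⟩⟩
      exact ⟨k, by simpa using congrArg (fun x : C => ((x : H) : alternatingGroup (Fin 5))) hk⟩
end

section
/- Every hyper-elementary subgroup of the group A_5 × ℤ/2 is isomorphic to a subgroup of one of the following three groups: the elementary abelian group (ℤ/2)³, the dihedral group D_6 of order 12, or the dihedral group D_{10} of order 20. -/
open Equiv Perm
set_option maxRecDepth 100000
theorem d1 : ∀ g : Perm (Fin 5), sign g = 1 → g^2=1 ∨ g^3=1 ∨ g^5=1 := by decide +kernel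
def c2 : Perm (Fin 5) := swap 0 1 * swap 2 3
def c3 : Perm (Fin 5) := swap 0 1 * swap 1 2
def c5 : Perm (Fin 5) := swap 0 1 * swap 1 2 * swap 2 3 * swap 3 4
theorem d2 : ∀ g : Perm (Fin 5), sign g = 1 → g * c2 * g⁻¹ = c2 → g^2=1 := by decide +kernel
def s3 : Perm (Fin 5) := swap 0 1 * swap 3 4
def s5 : Perm (Fin 5) := swap 0 4 * swap 1 3
theorem e2 : ∀ g : Perm (Fin 5), sign g = 1 → g ≠ 1 → g^2=1 → ∃ t : Perm (Fin 5), t * g * t⁻¹ = c2 := by decide +kernel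
theorem e3 : ∀ g : Perm (Fin 5), g ≠ 1 → g^3=1 → ∃ t : Perm (Fin 5), t * g * t⁻¹ = c3 := by decide +kernel
theorem e5 : ∀ g : Perm (Fin 5), g ≠ 1 → g^5=1 → ∃ t : Perm (Fin 5), t * g * t⁻¹ = c5 := by decide +kernel
def dih (n : ℕ) (c s : Perm (Fin 5)) : DihedralGroup n → Perm (Fin 5) × Multiplicative (ZMod 2)
 | .r i => (c ^ i.val, Multiplicative.ofAdd (i.val : ZMod 2))
 | .sr i => (s * c ^ i.val, Multiplicative.ofAdd (i.val : ZMod 2))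
theorem m3 : ∀ x y : DihedralGroup 6, dih 6 c3 s3 (x*y) = dih 6 c3 s3 x * dih 6 c3 s3 y := by decide +kernel
theorem m5 : ∀ x y : DihedralGroup 10, dih 10 c5 s5 (x*y) = dih 10 c5 s5 x * dih 10 c5 s5 y := by decide +kernel
theorem i3 : ∀ x : DihedralGroup 6, dih 6 c3 s3 x = 1 → x = 1 := by decide +kernel
theorem i5 : ∀ x : DihedralGroup 10, dih 10 c5 s5 x = 1 → x = 1 := by decide +kernel
theorem n3 : ∀ g : Perm (Fin 5), sign g = 1 → (∃ k : Fin 3, g * c3 * g⁻¹ = c3 ^ k.val) → ∀ z, ∃ x, dih 6 c3 s3 x = (g, z) := by decide +kernel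
theorem n5 : ∀ g : Perm (Fin 5), sign g = 1 → (∃ k : Fin 5, g * c5 * g⁻¹ = c5 ^ k.val) → ∀ z, ∃ x, dih 10 c5 s5 x = (g, z) := by decide +kernel

abbrev GG := alternatingGroup (Fin 5) × Multiplicative (ZMod 2)

theorem cardGG : Nat.card GG = 120 := by
  have h := nat_card_alternatingGroup (α := Fin 5)
  rw [Nat.card_prod, h]
  simp [Nat.factorial]

theorem caseA (H : Subgroup GG) (h : ∀ g ∈ H, g.1 ^ 2 = 1) :
    ∃ f : H →* (Fin 3 → Multiplicative (ZMod 2)), Function.Injective f := by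
  have hz : ∀ z : Multiplicative (ZMod 2), z ^ 2 = 1 := by decide
  have h2 : ∀ g : H, g ^ 2 = 1 := by
    intro g
    apply Subtype.ext
    exact Prod.ext (h g g.2) (hz _)
  let : CommGroup H := { (inferInstance : Group H) with
    mul_comm := fun a b => by
      have ha : ∀ x : H, x⁻¹ = x := fun x => by
        rw [inv_eq_iff_mul_eq_one, ← pow_two, h2]
      rw [← ha (a * b), mul_inv_rev, ha, ha] }
  let : Module (ZMod 2) (Additive H) := AddCommGroup.zmodModule (n := 2) (fun x => h2 x.toMul)
  have hp : IsPGroup 2 H := fun g => ⟨1, by simpa using h2 g⟩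
  have : Fact (Nat.Prime 2) := ⟨Nat.prime_two⟩
  obtain ⟨n, hn⟩ := IsPGroup.iff_card.1 hp
  have hd : 2 ^ n ∣ 120 := by
    rw [← hn, ← cardGG]; exact H.card_subgroup_dvd_card
  have hn3 : n ≤ 3 := by
    by_contra hlt
    have : 2 ^ 4 ∣ 120 := (pow_dvd_pow 2 (by omega)).trans hd
    omega
  have hfr : Module.finrank (ZMod 2) (Additive H) = n := by
    have h1 := Module.natCard_eq_pow_finrank (K := ZMod 2) (V := Additive H)
    have h3 : Nat.card (Additive H) = Nat.card H := rfl
    rw [h3, hn, Nat.card_zmod] at h1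
    exact (Nat.pow_right_injective le_rfl h1).symm
  have : Module.finrank (ZMod 2) (Additive H) ≤ Module.finrank (ZMod 2) (Fin 3 → ZMod 2) := by
    rw [hfr]; simpa using hn3
  obtain ⟨f, hf⟩ := finrank_le_iff_exists_linearMap.1 this
  refine ⟨⟨⟨fun x i => Multiplicative.ofAdd (f (Additive.ofMul x) i), ?_⟩, ?_⟩, ?_⟩
  · funext i
    have := map_zero f
    exact congrFun this i
  · intro x y
    funext i
    exact congrFun (map_add f (Additive.ofMul x) (Additive.ofMul y)) i
  · intro x y hxy
    exact hf (funext fun i => congrFun hxy i)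

def emb (t : Perm (Fin 5)) : GG →* Perm (Fin 5) × Multiplicative (ZMod 2) :=
  MonoidHom.prodMap ((MulAut.conj t).toMonoidHom.comp (alternatingGroup (Fin 5)).subtype) (MonoidHom.id _)

theorem emb_inj (t : Perm (Fin 5)) : Function.Injective (emb t) := by
  rintro ⟨a, z⟩ ⟨b, w⟩ h
  simp only [emb, MonoidHom.prodMap, MonoidHom.prod_apply, Prod.mk.injEq] at h
  refine Prod.ext (Subtype.ext ?_) h.2
  exact (MulAut.conj t).injective h.1

theorem caseB (n : ℕ) (c s c' t : Perm (Fin 5)) (q : ℕ) (hq : 0 < q)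
    (hm : ∀ x y : DihedralGroup n, dih n c s (x*y) = dih n c s x * dih n c s y)
    (hi : ∀ x : DihedralGroup n, dih n c s x = 1 → x = 1)
    (hn : ∀ g : Perm (Fin 5), sign g = 1 → (∃ k : Fin q, g * c * g⁻¹ = c ^ k.val) →
      ∀ z, ∃ x, dih n c s x = (g, z))
    (ht : t * c' * t⁻¹ = c) (hc : c' ^ q = 1)
    (H : Subgroup GG) (h : ∀ g ∈ H, ∃ k : ℤ, (g.1 : Perm (Fin 5)) * c' * (g.1 : Perm (Fin 5))⁻¹ = c' ^ k) :
    ∃ f : H →* DihedralGroup n, Function.Injective f := by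
  let φ : DihedralGroup n →* Perm (Fin 5) × Multiplicative (ZMod 2) := MonoidHom.mk' (dih n c s) hm
  have hφ : Function.Injective φ := (injective_iff_map_eq_one φ).2 hi
  have hr : ∀ g : H, emb t g ∈ φ.range := by
    rintro ⟨g, hg⟩
    obtain ⟨k, hk⟩ := h g hg
    have hs : sign (g.1 : Perm (Fin 5)) = 1 := mem_alternatingGroup.1 g.1.2
    obtain ⟨x, hx⟩ := hn (t * g.1 * t⁻¹) (by simp [hs]) (by
      have hq' : (0:ℤ) < q := by exact_mod_cast hq
      have h0 := Int.emod_nonneg k hq'.ne'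
      have h1 := Int.emod_lt_of_pos k hq'
      refine ⟨⟨(k % q).toNat, by omega⟩, ?_⟩
      have e : c' ^ k = c' ^ (k % q).toNat := by
        rw [← zpow_natCast, Int.toNat_of_nonneg h0]
        conv_lhs => rw [← Int.emod_add_mul_ediv k q, zpow_add, zpow_mul, zpow_natCast, hc]
        simp
      rw [← ht, conj_pow, ← e, ← hk]
      group) g.2
    exact ⟨x, hx⟩
  let ψ : H →* φ.range := ((emb t).comp H.subtype).codRestrict φ.range hr
  refine ⟨(MonoidHom.ofInjective hφ).symm.toMonoidHom.comp ψ, ?_⟩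
  intro x y hxy
  have h1 : ψ x = ψ y := (MonoidHom.ofInjective hφ).symm.injective hxy
  exact Subtype.ext (emb_inj t (congrArg Subtype.val h1))

/-- the trichotomy -/
theorem caseN (H : Subgroup GG) (c : Perm (Fin 5)) (hs : sign c = 1) (h1 : c ≠ 1)
    (h : ∀ g ∈ H, ∃ k : ℤ, (g.1 : Perm (Fin 5)) * c * (g.1 : Perm (Fin 5))⁻¹ = c ^ k) :
    (∃ f : H →* (Fin 3 → Multiplicative (ZMod 2)), Function.Injective f) ∨
    (∃ f : H →* DihedralGroup 6, Function.Injective f) ∨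
    (∃ f : H →* DihedralGroup 10, Function.Injective f) := by
  rcases d1 c hs with h2 | h3 | h5
  · left
    apply caseA
    intro g hg
    obtain ⟨t, ht⟩ := e2 c hs h1 h2
    obtain ⟨k, hk⟩ := h g hg
    have hsg : sign (g.1 : Perm (Fin 5)) = 1 := mem_alternatingGroup.1 g.1.2
    have hk' : (g.1 : Perm (Fin 5)) * c * (g.1 : Perm (Fin 5))⁻¹ = c := by
      rcases Int.even_or_odd' k with ⟨m, rfl | rfl⟩
      · exfalso
        rw [zpow_mul, zpow_ofNat, h2, one_zpow, conj_eq_one_iff] at hk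
        exact h1 hk
      · rwa [zpow_add, zpow_mul, zpow_ofNat, h2, one_zpow, one_mul, zpow_one] at hk
    have := d2 (t * g.1 * t⁻¹) (by simp [hsg]) (by
      calc _ = t * ((g.1 : Perm (Fin 5)) * c * (g.1 : Perm (Fin 5))⁻¹) * t⁻¹ := by
            rw [← ht]; group
        _ = c2 := by rw [hk', ht])
    rw [conj_pow, conj_eq_one_iff] at this
    exact Subtype.ext this
  · obtain ⟨t, ht⟩ := e3 c h1 h3
    exact Or.inr (Or.inl (caseB 6 c3 s3 c t 3 (by norm_num) m3 i3 n3 ht h3 H h))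
  · obtain ⟨t, ht⟩ := e5 c h1 h5
    exact Or.inr (Or.inr (caseB 10 c5 s5 c t 5 (by norm_num) m5 i5 n5 ht h5 H h))

theorem hyperelementary_subgroups_of_A5_prod_Z2
    (H : Subgroup (alternatingGroup (Fin 5) × Multiplicative (ZMod 2)))
    (hH : IsHyperElementary H) :
    (∃ f : H →* (Fin 3 → Multiplicative (ZMod 2)), Function.Injective f) ∨
    (∃ f : H →* DihedralGroup 6, Function.Injective f) ∨
    (∃ f : H →* DihedralGroup 10, Function.Injective f) := by
  obtain ⟨C, hN, hcyc, p, hp, hpC, hpg⟩ := hH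
  obtain ⟨c, hc⟩ := hcyc.exists_generator
  by_cases h1 : ((c : H) : GG).1 = 1
  · have : Fact p.Prime := ⟨hp⟩
    have hC : ∀ x ∈ C, ((x : H) : GG).1 = 1 := by
      intro x hx
      obtain ⟨k, hk⟩ := hc ⟨x, hx⟩
      have : x = (c : H) ^ k := by
        have := congrArg Subtype.val hk
        simpa using this.symm
      rw [this]
      simp [h1]
    have hK : IsPGroup p (H.map (MonoidHom.fst _ _)) := by
      rintro ⟨_, g, hg, rfl⟩
      obtain ⟨k, hk⟩ := hpg (QuotientGroup.mk (⟨g, hg⟩ : H))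
      refine ⟨k, ?_⟩
      rw [← QuotientGroup.mk_pow, QuotientGroup.eq_one_iff] at hk
      apply Subtype.ext
      have := hC _ hk
      simpa using this
    by_cases hall : ∀ g ∈ H, g.1 ^ 2 = 1
    · exact Or.inl (caseA H hall)
    push Not at hall
    obtain ⟨g, hg, hg2⟩ := hall
    have hg1 : g.1 ≠ 1 := by rintro h; exact hg2 (by rw [h]; simp)
    refine caseN H g.1 (mem_alternatingGroup.1 g.1.2) (fun h => hg1 (Subtype.ext h)) ?_
    intro x hx
    obtain ⟨n, hn⟩ := IsPGroup.iff_card.1 hK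
    have hd : p ^ n ∣ 60 := by
      rw [← hn]
      have h := nat_card_alternatingGroup (α := Fin 5)
      have h' : Nat.card (alternatingGroup (Fin 5)) = 60 := by rw [h]; simp [Nat.factorial]
      rw [← h']
      exact Subgroup.card_subgroup_dvd_card _
    have hp2 : p ≠ 2 := by
      rintro rfl
      obtain ⟨k, hk⟩ := hK ⟨g.1, g, hg, rfl⟩
      have hk : (g.1 : Perm (Fin 5)) ^ 2 ^ k = 1 := by
        simpa using congrArg (fun z => ((z : alternatingGroup (Fin 5)) : Perm (Fin 5))) (congrArg Subtype.val hk)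
      have hdv := orderOf_dvd_of_pow_eq_one hk
      rcases d1 g.1 (mem_alternatingGroup.1 g.1.2) with h | h | h
      · exact hg2 (Subtype.ext h)
      · have hh := Nat.dvd_gcd hdv (orderOf_dvd_of_pow_eq_one h)
        rw [Nat.Coprime.gcd_eq_one (Nat.Coprime.pow_left _ (by norm_num))] at hh
        exact hg1 (Subtype.ext (orderOf_eq_one_iff.1 (Nat.dvd_one.1 hh)))
      · have hh := Nat.dvd_gcd hdv (orderOf_dvd_of_pow_eq_one h)
        rw [Nat.Coprime.gcd_eq_one (Nat.Coprime.pow_left _ (by norm_num))] at hh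
        exact hg1 (Subtype.ext (orderOf_eq_one_iff.1 (Nat.dvd_one.1 hh)))
    have hn1 : n ≤ 1 := by
      by_contra hlt
      have h2 : p ^ 2 ∣ 60 := (pow_dvd_pow p (by omega)).trans hd
      have hle : p ≤ 7 := by
        have := Nat.le_of_dvd (by norm_num) h2
        nlinarith
      have := hp.two_le
      interval_cases p <;> revert h2 hp2 hp <;> decide
    have hcomm : ∀ a b : H.map (MonoidHom.fst (alternatingGroup (Fin 5)) (Multiplicative (ZMod 2))), a * b = b * a := by
      have : IsCyclic (H.map (MonoidHom.fst (alternatingGroup (Fin 5)) (Multiplicative (ZMod 2)))) := by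
        interval_cases n
        · have := (Nat.card_eq_one_iff_unique.1 (hn.trans (pow_zero p))).1
          exact isCyclic_of_subsingleton
        · exact isCyclic_of_prime_card (p := p) (by simpa using hn)
      exact fun a b => IsCyclic.isMulCommutative.is_comm.comm a b
    refine ⟨1, ?_⟩
    have := hcomm ⟨x.1, x, hx, rfl⟩ ⟨g.1, g, hg, rfl⟩
    have := congrArg (fun z => ((z : alternatingGroup (Fin 5)) : Perm (Fin 5))) (congrArg Subtype.val this)
    simp only [Subgroup.coe_mul] at this
    rw [this]; simp
  · refine caseN H ((c : H) : GG).1 (mem_alternatingGroup.1 (((c : H) : GG).1).2)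
      (fun h => h1 (Subtype.ext h)) ?_
    intro g hg
    obtain ⟨k, hk⟩ := hc ⟨_, hN.conj_mem c c.2 ⟨g, hg⟩⟩
    refine ⟨k, ?_⟩
    have := congrArg (fun z => ((((z : H) : GG).1 : alternatingGroup (Fin 5)) : Perm (Fin 5))) (congrArg Subtype.val hk)
    simpa using this.symm
end

section
/- In the dihedral group D_6 of order 12, the number of equivalence classes of elements under the relation 'x ≈ y if and only if y is conjugate to x or to x⁻¹' is equal to the number of conjugacy classes of cyclic subgroups (i.e., orbits of the conjugation action of D_6 on the set of its cyclic subgroups). (In the notation of the paper, r = q for D_6, so the Whitehead group Wh(D_6) has rank 0.) -/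
theorem d6_pow_six : ∀ z : DihedralGroup 6, z ^ 6 = 1 := by decide

set_option maxRecDepth 100000 in
set_option maxHeartbeats 4000000 in
theorem d6_gen_aux : ∀ z y : DihedralGroup 6, (∃ i : Fin 6, z ^ (i : ℕ) = y) →
    (∃ i : Fin 6, y ^ (i : ℕ) = z) → z = y ∨ z⁻¹ = y := by decide

theorem d6_mem {y z : DihedralGroup 6} (h : y ∈ Subgroup.zpowers z) :
    ∃ i : Fin 6, z ^ (i : ℕ) = y := by
  obtain ⟨k, rfl⟩ := Subgroup.mem_zpowers_iff.1 h
  refine ⟨⟨(k % 6).toNat, by omega⟩, ?_⟩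
  have h1 : (((k % 6).toNat : ℕ) : ℤ) = k % 6 := by omega
  have h6 : z ^ (6 : ℤ) = 1 := by
    have := d6_pow_six z
    exact_mod_cast this
  change z ^ (k % 6).toNat = z ^ k
  rw [← zpow_natCast, h1]
  conv_rhs => rw [← Int.emod_add_mul_ediv k 6, zpow_add, zpow_mul, h6, one_zpow, mul_one]

theorem d6_gen {y z : DihedralGroup 6} (h : Subgroup.zpowers z = Subgroup.zpowers y) :
    z = y ∨ z⁻¹ = y :=
  d6_gen_aux z y (d6_mem (h ▸ Subgroup.mem_zpowers y)) (d6_mem (h ▸ Subgroup.mem_zpowers z))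

theorem d6_conj_gen {x y g : DihedralGroup 6}
    (h : Subgroup.map (MulAut.conj g).toMonoidHom (Subgroup.zpowers x) = Subgroup.zpowers y) :
    IsConj x y ∨ IsConj x⁻¹ y := by
  rw [MonoidHom.map_zpowers] at h
  rcases d6_gen h with h | h
  · left
    exact isConj_iff.2 ⟨g, by simpa using h⟩
  · right
    exact isConj_iff.2 ⟨g, by simpa [mul_assoc] using h⟩

/-- In `D_6`, the number of equivalence classes of elements under
`x ≈ y ↔ (y is conjugate to x or to x⁻¹)` equals the number of conjugacy classes of cyclic
subgroups (in the notation of the paper, `r = q`, so `Wh(D_6)` has rank 0). -/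
theorem D6_r_eq_q :
    Nat.card (Quot (fun x y : DihedralGroup 6 => IsConj x y ∨ IsConj x⁻¹ y)) =
    Nat.card
      (Quot (fun H K : {H : Subgroup (DihedralGroup 6) // ∃ x, H = Subgroup.zpowers x} =>
        ∃ g : DihedralGroup 6,
          Subgroup.map (MulAut.conj g).toMonoidHom H.1 = K.1)) := by
  classical
  let C := {H : Subgroup (DihedralGroup 6) // ∃ x, H = Subgroup.zpowers x}
  refine Nat.card_congr
    { toFun := Quot.lift (fun x => Quot.mk _ ⟨Subgroup.zpowers x, x, rfl⟩) ?_
      invFun := Quot.lift (fun H : C => Quot.mk _ H.2.choose) ?_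
      left_inv := ?_
      right_inv := ?_ }
  · rintro x y (h | h)
    · obtain ⟨g, rfl⟩ := isConj_iff.1 h
      refine Quot.sound ⟨g, ?_⟩
      simp [MonoidHom.map_zpowers]
    · obtain ⟨g, rfl⟩ := isConj_iff.1 h
      refine Quot.sound ⟨g, ?_⟩
      change Subgroup.map _ (Subgroup.zpowers x) = _
      rw [← Subgroup.zpowers_inv, MonoidHom.map_zpowers]
      simp
  · rintro H K ⟨g, h⟩
    refine Quot.sound (d6_conj_gen (g := g) ?_)
    rw [← H.2.choose_spec, ← K.2.choose_spec, h]
  · rintro ⟨x⟩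
    symm
    refine Quot.sound ?_
    refine d6_conj_gen (g := 1) ?_
    have h : ∃ y, Subgroup.zpowers x = Subgroup.zpowers y := ⟨x, rfl⟩
    rw [← h.choose_spec]
    simp [MonoidHom.map_zpowers]
  · rintro ⟨H⟩
    exact congrArg (Quot.mk _) (Subtype.ext H.2.choose_spec.symm)
end

section
/- The rational group algebra ℚ[D_6 × ℤ/2] of the direct product of the dihedral group of order 12 with the cyclic group of order 2 is isomorphic, as a ring, to the product ℚ⁸ × (M₂(ℚ))⁴ of eight copies of ℚ and four copies of the ring of 2 × 2 matrices over ℚ. -/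
namespace D6Z2

abbrev G := DihedralGroup 6 × Multiplicative (ZMod 2)
abbrev TZ := (Fin 8 → ℤ) × (Fin 4 → Matrix (Fin 2) (Fin 2) ℤ)
abbrev TQ := (Fin 8 → ℚ) × (Fin 4 → Matrix (Fin 2) (Fin 2) ℚ)

/-- `1` on even, `-1` on odd residues mod 6. -/
def sg6 : Fin 6 → ℤ := ![1, -1, 1, -1, 1, -1]
/-- the sign character of `ℤ/2`. -/
def sg2 : Fin 2 → ℤ := ![1, -1]
/-- powers of an integer rotation matrix of order 6. -/
def rot : Fin 6 → Matrix (Fin 2) (Fin 2) ℤ :=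
  ![!![1, 0; 0, 1], !![0, -1; 1, 1], !![-1, -1; 1, 0],
    !![-1, 0; 0, -1], !![0, 1; -1, -1], !![1, 1; -1, 0]]
/-- swap times powers of the rotation. -/
def refl : Fin 6 → Matrix (Fin 2) (Fin 2) ℤ :=
  ![!![0, 1; 1, 0], !![1, 1; 0, -1], !![1, 0; -1, -1],
    !![0, -1; -1, 0], !![-1, -1; 0, 1], !![-1, 0; 1, 1]]

def chi (a b : Bool) : DihedralGroup 6 → ℤ
  | .r i => bif a then sg6 i else 1
  | .sr i => (bif a then sg6 i else 1) * (bif b then -1 else 1)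

def rho (a : Bool) : DihedralGroup 6 → Matrix (Fin 2) (Fin 2) ℤ
  | .r i => (bif a then sg6 i else 1) • rot i
  | .sr i => (bif a then sg6 i else 1) • refl i

def eps (c : Bool) (z : Multiplicative (ZMod 2)) : ℤ :=
  bif c then sg2 z.toAdd else 1

theorem chi_mul (a b) : ∀ x y, chi a b (x * y) = chi a b x * chi a b y := by
  revert a b; decide +kernel
theorem rho_mul (a) : ∀ x y, rho a (x * y) = rho a x * rho a y := by
  revert a; decide +kernel
theorem eps_mul (c) : ∀ x y, eps c (x * y) = eps c x * eps c y := by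
  revert c; decide +kernel
theorem chi_one (a b) : chi a b 1 = 1 := by revert a b; decide +kernel
theorem rho_one (a) : rho a 1 = 1 := by revert a; decide +kernel
theorem eps_one (c) : eps c 1 = 1 := by revert c; decide +kernel

def homZ : G →* TZ where
  toFun g := (fun i => eps (i.val.testBit 2) g.2 * chi (i.val.testBit 0) (i.val.testBit 1) g.1,
    fun i => eps (i.val.testBit 1) g.2 • rho (i.val.testBit 0) g.1)
  map_one' := by
    ext i <;> simp [chi_one, rho_one, eps_one]
  map_mul' x y := by
    refine Prod.ext (funext fun i => ?_) (funext fun i => ?_)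
    · simp only [Prod.fst_mul, Prod.snd_mul, Pi.mul_apply, chi_mul, eps_mul]; ring
    · simp only [Prod.fst_mul, Prod.snd_mul, Pi.mul_apply, rho_mul, eps_mul,
        smul_mul_smul_comm]

/-- the weighted trace. -/
def trZ (t : TZ) : ℤ := ∑ i, t.1 i + 2 * ∑ i, (t.2 i 0 0 + t.2 i 1 1)

theorem trZ_hom : ∀ g : G, trZ (homZ g) = if g = 1 then 24 else 0 := by
  decide +kernel

def castHom : TZ →+* TQ :=
  RingHom.prodMap (RingHom.pi fun i => (Int.castRingHom ℚ).comp (Pi.evalRingHom _ i))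
    (RingHom.pi fun i => (Int.castRingHom ℚ).mapMatrix.comp (Pi.evalRingHom _ i))

noncomputable def phi : MonoidAlgebra ℚ G →ₐ[ℚ] TQ :=
  MonoidAlgebra.lift ℚ TQ G (castHom.toMonoidHom.comp homZ)

noncomputable def trQ : TQ →ₗ[ℚ] ℚ where
  toFun t := ∑ i, t.1 i + 2 * ∑ i, (t.2 i 0 0 + t.2 i 1 1)
  map_add' x y := by
    simp [Finset.sum_add_distrib]; ring
  map_smul' c x := by
    simp [Finset.mul_sum, mul_add]
    simp only [Fin.sum_univ_succ]; simp; ring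

theorem trQ_cast (t : TZ) : trQ (castHom t) = (trZ t : ℚ) := by
  simp [trQ, castHom, trZ]

theorem trQ_phi (f : MonoidAlgebra ℚ G) : trQ (phi f) = 24 * f.coeff 1 := by
  induction f using MonoidAlgebra.induction_linear with
  | zero => simp
  | add f g hf hg => rw [map_add, map_add, hf, hg]; simp [mul_add]
  | single g c =>
    have : phi (MonoidAlgebra.single g c) = c • castHom (homZ g) := by
      simp [phi]
    rw [this, map_smul, trQ_cast, trZ_hom, MonoidAlgebra.coeff_single_apply]
    split_ifs <;> simp [mul_comm]

theorem phi_inj : Function.Injective phi := by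
  rw [injective_iff_map_eq_zero]
  intro f hf
  ext g
  have h := trQ_phi (f * MonoidAlgebra.single g⁻¹ 1)
  rw [map_mul, hf, zero_mul, map_zero, MonoidAlgebra.coeff_mul_single_apply] at h
  simpa using h.symm

theorem finrank_eq : Module.finrank ℚ (MonoidAlgebra ℚ G) = Module.finrank ℚ TQ := by
  have h1 : Module.finrank ℚ (MonoidAlgebra ℚ G) = Fintype.card G :=
    (MonoidAlgebra.coeffLinearEquiv ℚ).finrank_eq.trans (Module.finrank_finsupp_self ℚ)
  have h2 : Fintype.card G = 24 := by decide +kernel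
  rw [h1, h2]
  simp [Module.finrank_prod, Module.finrank_pi_fintype, Module.finrank_matrix]

end D6Z2

/-- `ℚ[D_6 × ℤ/2] ≅ ℚ⁸ × (M₂(ℚ))⁴` as rings. -/
theorem rat_group_algebra_D6_prod_Z2 :
    Nonempty
      (MonoidAlgebra ℚ (DihedralGroup 6 × Multiplicative (ZMod 2)) ≃+*
        (Fin 8 → ℚ) × (Fin 4 → Matrix (Fin 2) (Fin 2) ℚ)) := by
  have : FiniteDimensional ℚ (MonoidAlgebra ℚ D6Z2.G) :=
    Module.finite_of_finrank_pos (by rw [D6Z2.finrank_eq]; exact Module.finrank_pos)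
  exact ⟨RingEquiv.ofBijective D6Z2.phi ⟨D6Z2.phi_inj,
    (LinearMap.injective_iff_surjective_of_finrank_eq_finrank (f := D6Z2.phi.toLinearMap)
      D6Z2.finrank_eq).1 D6Z2.phi_inj⟩⟩
end

section
/- The quotient of the group algebra 𝔽₅[D_5] of the dihedral group of order 10 over the field with five elements by its Jacobson radical is isomorphic, as a ring, to 𝔽₅ × 𝔽₅. (This is the algebraic content behind the identification K₀(ẑ₅[D_5]) ≅ K₀(𝔽₅[ℤ/2]) = K₀(𝔽₅ × 𝔽₅) ≅ ℤ².) -/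
namespace D5Aux

open DihedralGroup

abbrev A := MonoidAlgebra (ZMod 5) (DihedralGroup 5)

noncomputable abbrev o (g : DihedralGroup 5) : A := MonoidAlgebra.of (ZMod 5) (DihedralGroup 5) g

noncomputable def u : A := o (r 1) - 1

def sgn : DihedralGroup 5 →* ZMod 5 where
  toFun g := match g with
    | r _ => 1
    | sr _ => -1
  map_one' := rfl
  map_mul' := by rintro (i | i) (j | j) <;> simp

noncomputable def f : A →ₐ[ZMod 5] ZMod 5 × ZMod 5 :=
  (MonoidAlgebra.lift (ZMod 5) (ZMod 5) (DihedralGroup 5) 1).prod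
    (MonoidAlgebra.lift (ZMod 5) (ZMod 5) (DihedralGroup 5) sgn)

lemma f_r (i : ZMod 5) : f (o (r i)) = (1, 1) := by
  simp [f, o]; rfl

lemma f_sr (i : ZMod 5) : f (o (sr i)) = (1, -1) := by
  simp [f, o]; rfl

lemma o_mul (g h : DihedralGroup 5) : o g * o h = o (g * h) := (map_mul _ _ _).symm

lemma o_one : o (r 0) = 1 := map_one (MonoidAlgebra.of (ZMod 5) (DihedralGroup 5))

lemma u_pow : u ^ 5 = 0 := by
  have : Fact (Nat.Prime 5) := ⟨by norm_num⟩
  have : CharP A 5 := charP_of_injective_algebraMap (algebraMap (ZMod 5) A).injective 5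
  have h : (o (r 1)) ^ 5 = 1 := by
    rw [o, ← map_pow, r_one_pow]
    exact o_one
  rw [u, sub_pow_char_of_commute 5 (Commute.one_right _), h, one_pow, sub_self]

lemma u_comm (a : A) : ∃ b, u * a = b * u := by
  induction a using MonoidAlgebra.induction_on with
  | of g =>
    change ∃ b, u * o g = b * u
    rcases g with i | i
    · refine ⟨o (r i), ?_⟩
      simp only [u, sub_mul, mul_sub, o_mul, one_mul, mul_one, r_mul_r, add_comm]
    · refine ⟨- o (sr (i - 1)), ?_⟩
      simp only [u, sub_mul, mul_sub, neg_mul, o_mul, one_mul, mul_one, r_mul_sr, sr_mul_r,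
        sub_add_cancel]
      abel
  | add x y hx hy =>
    obtain ⟨b, hb⟩ := hx
    obtain ⟨c, hc⟩ := hy
    exact ⟨b + c, by rw [mul_add, add_mul, hb, hc]⟩
  | smul t x hx =>
    obtain ⟨b, hb⟩ := hx
    exact ⟨t • b, by rw [mul_smul_comm, smul_mul_assoc, hb]⟩

lemma pow_mem (a : A) (n : ℕ) : ∃ b, (a * u) ^ n = b * u ^ n := by
  induction n with
  | zero => exact ⟨1, by simp⟩
  | succ n ih =>
    obtain ⟨b, hb⟩ := ih
    have : ∀ m : ℕ, ∃ c, u ^ m * a = c * u ^ m := by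
      intro m
      induction m with
      | zero => exact ⟨a, by simp⟩
      | succ m ih =>
        obtain ⟨c, hc⟩ := ih
        obtain ⟨d, hd⟩ := u_comm c
        exact ⟨d, by rw [pow_succ', mul_assoc, hc, ← mul_assoc, hd, mul_assoc]⟩
    obtain ⟨c, hc⟩ := this n
    exact ⟨b * c, by rw [pow_succ, hb, mul_assoc, ← mul_assoc (u ^ n), hc, pow_succ]; simp only [mul_assoc]⟩

lemma r_form (i : ZMod 5) : ∃ c, o (r i) = c * u + 1 := by
  refine ⟨∑ k ∈ Finset.range i.val, (o (r 1)) ^ k, ?_⟩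
  rw [u, geom_sum_mul, sub_add_cancel, o, ← map_pow, r_one_pow, ZMod.natCast_zmod_val]

lemma form (x : A) : ∃ (c : A) (s t : ZMod 5), x = c * u + s • 1 + t • o (sr 0) := by
  induction x using MonoidAlgebra.induction_on with
  | of g =>
    change ∃ (c : A) (s t : ZMod 5), o g = c * u + s • 1 + t • o (sr 0)
    rcases g with i | i
    · obtain ⟨c, hc⟩ := r_form i
      exact ⟨c, 1, 0, by rw [hc]; simp⟩
    · obtain ⟨c, hc⟩ := r_form i
      refine ⟨o (sr 0) * c, 0, 1, ?_⟩
      have : o (sr i) = o (sr 0) * o (r i) := by rw [o_mul, sr_mul_r, zero_add]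
      rw [this, hc, mul_add, mul_assoc, mul_one, zero_smul, one_smul, add_zero]
  | add x y hx hy =>
    obtain ⟨b, s, t, hb⟩ := hx
    obtain ⟨c, s', t', hc⟩ := hy
    refine ⟨b + c, s + s', t + t', ?_⟩
    rw [hb, hc, add_mul, add_smul, add_smul]
    abel
  | smul k x hx =>
    obtain ⟨b, s, t, hb⟩ := hx
    exact ⟨k • b, k * s, k * t, by rw [hb, smul_add, smul_add, smul_mul_assoc, mul_smul, mul_smul]⟩

lemma f_u : f u = 0 := by
  rw [u, map_sub, f_r, map_one]; exact sub_self _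

lemma ker_form (x : A) (hx : f x = 0) : ∃ c, x = c * u := by
  obtain ⟨c, s, t, rfl⟩ := form x
  rw [map_add, map_add, map_mul, f_u, map_smul, map_smul, map_one, f_sr] at hx
  have h1 : s + t = 0 := by simpa using congrArg Prod.fst hx
  have h2 : s + -t = 0 := by simpa using congrArg Prod.snd hx
  have : s = 0 ∧ t = 0 := by
    clear hx; revert s t; decide
  exact ⟨c, by simp [this.1, this.2]⟩

lemma f_surj : Function.Surjective f := by
  rintro ⟨a, b⟩
  refine ⟨(3 * (a + b)) • 1 + (3 * (a - b)) • o (sr 0), ?_⟩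
  rw [map_add, map_smul, map_smul, map_one, f_sr]
  revert a b; decide

lemma mem_jac (x : A) : x ∈ TwoSidedIdeal.jacobson (⊥ : TwoSidedIdeal A) ↔ f x = 0 := by
  rw [TwoSidedIdeal.mem_jacobson_iff]
  simp only [TwoSidedIdeal.mem_bot]
  constructor
  · intro h
    have key : ∀ g : A →ₐ[ZMod 5] ZMod 5, g x = 0 := by
      intro g
      by_contra hne
      have : Fact (Nat.Prime 5) := ⟨by norm_num⟩
      obtain ⟨z, hz⟩ := h (algebraMap (ZMod 5) A (-(g x)⁻¹))
      have := congrArg g hz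
      rw [map_sub, map_add, map_mul, map_mul, AlgHom.commutes, map_one, map_zero, mul_assoc] at this
      simp [hne] at this
    exact Prod.ext (key ((AlgHom.fst _ _ _).comp f)) (key ((AlgHom.snd _ _ _).comp f))
  · intro h y
    obtain ⟨c, hc⟩ := ker_form (y * x) (by rw [map_mul, h, mul_zero])
    have hn : IsNilpotent (y * x) := by
      obtain ⟨b, hb⟩ := pow_mem c 5
      exact ⟨5, by rw [hc, hb, u_pow, mul_zero]⟩
    obtain ⟨z, hz⟩ := hn.isUnit_add_one.exists_left_inv
    refine ⟨z, ?_⟩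
    rw [mul_assoc, sub_eq_zero, ← hz, mul_add, mul_one]

end D5Aux

/-- The quotient of `𝔽₅[D_5]` by its Jacobson radical (the Jacobson radical of
the zero two-sided ideal) is isomorphic, as a ring, to `𝔽₅ × 𝔽₅`. -/
theorem F5_group_algebra_D5_mod_jacobson :
    Nonempty
      ((TwoSidedIdeal.jacobson
          (⊥ : TwoSidedIdeal (MonoidAlgebra (ZMod 5) (DihedralGroup 5)))).ringCon.Quotient
        ≃+* ZMod 5 × ZMod 5) := by
  have h : (TwoSidedIdeal.jacobson (⊥ : TwoSidedIdeal D5Aux.A)).ringCon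
      = RingCon.ker D5Aux.f.toRingHom := by
    ext x y
    rw [TwoSidedIdeal.rel_iff, D5Aux.mem_jac, map_sub, sub_eq_zero]
    rfl
  exact ⟨(RingCon.congr (RingEquiv.refl _) (by rw [h]; rfl)).trans
    (RingCon.quotientKerEquivOfSurjective D5Aux.f.toRingHom D5Aux.f_surj)⟩
end
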